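/- arXiv:2206.09348 — 2 statements merged into one kernel-verified Lean document; each statement's English description precedes it below -/
import Mathlib

section
/- For every y ∈ R^X and all 0 < η ≤ η′: (1/η)·[ (ηy)_X + min_{q∈Δ(X)} h(q) ] ≤ (1/η′)·[ (η′y)_X + min_{q∈Δ(X)} h(q) ], where (ηy)_X denotes the root class score of the vector ηy. -/
/-!
The root score is the convex conjugate of the nested entropy `h` on the simplex:
`y_X = max_p (⟨y, p⟩ - h p)`.  Hence
`(1/η) * ((ηy)_X + min h) = max_p (⟨y, p⟩ - (h p - min h) / η)`,
and the right side is nondecreasing in `η` because `h p - min h ≥ 0`.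

For the duality, let `q` be the nested logit distribution attached to `y`.  The mass of the
level-`l` class of `x` under `q` is the product of the conditional choice probabilities above it
(`sum_gibbs`), so the increments of the score along the chain of classes of `x` are
`μ (l+1)` times the increments of `log q_C`.  Abel summation turns this into
`y x - y_X = ∑ l, (μ l - μ (l+1)) * log q_(C_l)` with `C_l` the level-`l`
class of `x` (`sub_score_eq`).  Averaging under `p`, the claim
`⟨y, p⟩ - y_X ≤ h p` is Gibbs' inequality on each partition (`gibbs_ineq`), with equality at
`p = q`.  The case `y = 0` shows that `h` is bounded below on the simplex, so that its real
infimum is a genuine lower bound.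
-/

noncomputable section

namespace NestedBandits

/-- A similarity structure of depth `L ≥ 1` on a finite set `X`, encoded by the map
`cls l x` = the similarity class of level `l` containing `x`. -/
structure SimStruct (X : Type*) [Fintype X] [DecidableEq X] where
  L : ℕ
  one_le_L : 1 ≤ L
  cls : ℕ → X → Finset X
  mem_cls : ∀ l x, x ∈ cls l x
  cls_zero : ∀ x, cls 0 x = Finset.univ
  cls_L : ∀ x, cls L x = {x}
  cls_congr : ∀ l x z, z ∈ cls l x → cls l z = cls l x
  cls_refines : ∀ l x, l < L → cls (l + 1) x ⊆ cls l x

variable {X : Type*} [Fintype X] [DecidableEq X]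

/-- The probability `p_C` of a class `C`. -/
def pC (p : X → ℝ) (C : Finset X) : ℝ := ∑ x ∈ C, p x

/-- The simplex `Δ(X)` of probability vectors on `X`. -/
def simplex (X : Type*) [Fintype X] : Set (X → ℝ) :=
  {p | (∀ x, 0 ≤ p x) ∧ ∑ x, p x = 1}

/-- `t * log t`, with the convention `0 * log 0 = 0` (automatic since `Real.log 0 = 0`). -/
def xlogx (t : ℝ) : ℝ := t * Real.log t

/-- Auxiliary class score: `k` is the number of levels below the class (so the class has
level `S.L - k`). -/
def scoreAux (S : SimStruct X) (μ : ℕ → ℝ) (y : X → ℝ) : ℕ → Finset X → ℝ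
  | 0, C => ∑ x ∈ C, y x
  | k + 1, C =>
      μ (S.L - k) *
        Real.log (∑ C' ∈ C.image (S.cls (S.L - k)), Real.exp (scoreAux S μ y k C' / μ (S.L - k)))

/-- The class score `y_C` of a class `C` of level `l`. -/
def score (S : SimStruct X) (μ : ℕ → ℝ) (y : X → ℝ) (l : ℕ) (C : Finset X) : ℝ :=
  scoreAux S μ y (S.L - l) C

/-- The nested choice probability `P_{x | C}(y)` where `C = S.cls l x` is the level-`l`
class of `x`: the product of the conditional choice probabilities along the chain of
classes from `C` down to `{x}`. -/
def condProb (S : SimStruct X) (μ : ℕ → ℝ) (y : X → ℝ) (l : ℕ) (x : X) : ℝ :=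
  ∏ l' ∈ Finset.Ico l S.L,
    Real.exp ((score S μ y (l' + 1) (S.cls (l' + 1) x) - score S μ y l' (S.cls l' x)) / μ (l' + 1))

/-- The nested entropy `h_C(p)` of a class `C` of level `l`. -/
def nestEnt (S : SimStruct X) (μ : ℕ → ℝ) (p : X → ℝ) (l : ℕ) (C : Finset X) : ℝ :=
  ∑ l' ∈ Finset.Icc (max l 1) S.L,
    (μ l' - μ (l' + 1)) * ∑ C' ∈ C.image (S.cls l'), xlogx (pC p C')

/-- The conditional entropy `h(p | C)` of a class `C` of level `l`. -/
def condEnt (S : SimStruct X) (μ : ℕ → ℝ) (p : X → ℝ) (l : ℕ) (C : Finset X) : ℝ :=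
  if l < S.L then
    μ (l + 1) * ∑ C' ∈ C.image (S.cls (l + 1)), pC p C' * (Real.log (pC p C') - Real.log (pC p C))
  else 0

/-- Auxiliary nested power sum: `k = S.L - l ≥ 1` levels below the class. -/
def npsAux (S : SimStruct X) (μ : ℕ → ℝ) (y c : X → ℝ) : ℕ → Finset X → ℝ
  | 0, _ => 0
  | 1, C => ∑ x ∈ C, condProb S μ y (S.L - 1) x * Real.exp (-c x / μ S.L)
  | k + 2, C =>
      ∑ C' ∈ C.image (S.cls (S.L - (k + 1))),
        Real.exp ((score S μ y (S.L - (k + 1)) C' - score S μ y (S.L - (k + 2)) C) /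
            μ (S.L - (k + 1))) *
          npsAux S μ y c (k + 1) C' ^ (μ (S.L - k) / μ (S.L - (k + 1)))

/-- The nested power sum `σ_{c,y}(C)` for a class `C` of level `l < S.L`. -/
def nps (S : SimStruct X) (μ : ℕ → ℝ) (y c : X → ℝ) (l : ℕ) (C : Finset X) : ℝ :=
  npsAux S μ y c (S.L - l) C

/-- The Fenchel coupling `F(p, y) = h(p) + y_X - ⟨y, p⟩`. -/
def fench (S : SimStruct X) (μ : ℕ → ℝ) (p y : X → ℝ) : ℝ :=
  nestEnt S μ p 0 Finset.univ + score S μ y 0 Finset.univ - ∑ x, y x * p x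

/-- The effective number of alternatives `N_eff = (∑_l √(N^l) R̄_l)²`. -/
def Neff (S : SimStruct X) (R : ℕ → Finset X → ℝ) : ℝ :=
  (∑ l ∈ Finset.Icc 1 S.L,
      Real.sqrt ((Finset.univ.image (S.cls l)).card) *
        Real.sqrt ((∑ C ∈ Finset.univ.image (S.cls l), R l C ^ 2) /
          ((Finset.univ.image (S.cls l)).card))) ^ 2

/-! ### Sums over classes and the score recursion -/

/-- A sum over a set that is a union of level-`k` classes splits into sums over these classes. -/
lemma sum_split (S : SimStruct X) (k : ℕ) (D : Finset X) (hD : ∀ z ∈ D, S.cls k z ⊆ D)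
    (f : X → ℝ) : ∑ C ∈ D.image (S.cls k), ∑ x ∈ C, f x = ∑ x ∈ D, f x := by
  rw [← Finset.sum_fiberwise_of_maps_to (g := S.cls k) (t := D.image (S.cls k))
    (fun x hx => Finset.mem_image_of_mem _ hx)]
  refine Finset.sum_congr rfl fun C hC => ?_
  obtain ⟨z, hz, rfl⟩ := Finset.mem_image.1 hC
  refine Finset.sum_congr ?_ fun _ _ => rfl
  ext x
  simp only [Finset.mem_filter]
  refine ⟨fun hx => ⟨hD z hz hx, S.cls_congr k z x hx⟩, fun hx => ?_⟩
  rw [← hx.2]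
  exact S.mem_cls k x

lemma cls_subset (S : SimStruct X) {l : ℕ} (hl : l < S.L) (x z : X) (hz : z ∈ S.cls l x) :
    S.cls (l + 1) z ⊆ S.cls l x := by
  rw [← S.cls_congr l x z hz]
  exact S.cls_refines l z hl

lemma mu_pos (S : SimStruct X) (μ : ℕ → ℝ)
    (hμ_mono : ∀ l : ℕ, 1 ≤ l → l < S.L → μ (l + 1) ≤ μ l) (hμ_pos : 0 < μ S.L)
    (l : ℕ) (h1 : 1 ≤ l) (hl : l ≤ S.L) : 0 < μ l := by
  induction hl using Nat.decreasingInduction with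
  | self => exact hμ_pos
  | of_succ k hk ih => exact (ih (by omega)).trans_le (hμ_mono k h1 hk)

lemma score_L (S : SimStruct X) (μ : ℕ → ℝ) (y : X → ℝ) (x : X) :
    score S μ y S.L (S.cls S.L x) = y x := by
  simp [score, scoreAux, S.cls_L]

lemma score_rec (S : SimStruct X) (μ : ℕ → ℝ) (y : X → ℝ) {l : ℕ} (hl : l < S.L)
    (C : Finset X) :
    score S μ y l C = μ (l + 1) * Real.log (∑ C' ∈ C.image (S.cls (l + 1)),
      Real.exp (score S μ y (l + 1) C' / μ (l + 1))) := by
  have h1 : S.L - l = (S.L - (l + 1)) + 1 := by omega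
  have h2 : S.L - (S.L - (l + 1)) = l + 1 := by omega
  rw [score, h1, scoreAux, h2]
  rfl

/-- The conditional choice probabilities of the children of a nonempty class sum to one. -/
lemma sum_exp_score (S : SimStruct X) (μ : ℕ → ℝ) (y : X → ℝ) {l : ℕ} (hl : l < S.L)
    (hμ : 0 < μ (l + 1)) (C : Finset X) (hC : C.Nonempty) :
    ∑ C' ∈ C.image (S.cls (l + 1)),
      Real.exp ((score S μ y (l + 1) C' - score S μ y l C) / μ (l + 1)) = 1 := by
  have hpos : 0 < ∑ C' ∈ C.image (S.cls (l + 1)),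
      Real.exp (score S μ y (l + 1) C' / μ (l + 1)) :=
    Finset.sum_pos (fun _ _ => Real.exp_pos _) (hC.image _)
  have hs : Real.exp (score S μ y l C / μ (l + 1)) = ∑ C' ∈ C.image (S.cls (l + 1)),
      Real.exp (score S μ y (l + 1) C' / μ (l + 1)) := by
    rw [score_rec S μ y hl, mul_div_cancel_left₀ _ hμ.ne', Real.exp_log hpos]
  simp only [sub_div, Real.exp_sub]
  rw [← Finset.sum_div, hs, div_self hpos.ne']

/-! ### The nested logit distribution -/

/-- The nested logit probability of the level-`l` class of `x`: the product of the conditional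
choice probabilities along the chain of classes from the root down to level `l`. -/
def gibbs (S : SimStruct X) (μ : ℕ → ℝ) (y : X → ℝ) (l : ℕ) (x : X) : ℝ :=
  ∏ i ∈ Finset.range l,
    Real.exp ((score S μ y (i + 1) (S.cls (i + 1) x) - score S μ y i (S.cls i x)) / μ (i + 1))

lemma gibbs_pos (S : SimStruct X) (μ : ℕ → ℝ) (y : X → ℝ) (l : ℕ) (x : X) :
    0 < gibbs S μ y l x :=
  Finset.prod_pos fun _ _ => Real.exp_pos _

lemma cls_eq_of_le (S : SimStruct X) {l : ℕ} (hl : l ≤ S.L) (x z : X) (hz : z ∈ S.cls l x)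
    {i : ℕ} (hi : i ≤ l) : S.cls i z = S.cls i x := by
  induction hi using Nat.decreasingInduction with
  | self => exact S.cls_congr l x z hz
  | of_succ k hk ih =>
    refine S.cls_congr k x z (S.cls_refines k x (by omega) ?_)
    rw [← ih]
    exact S.mem_cls _ z

lemma gibbs_congr (S : SimStruct X) (μ : ℕ → ℝ) (y : X → ℝ) {l : ℕ} (hl : l ≤ S.L) (x z : X)
    (hz : z ∈ S.cls l x) : gibbs S μ y l z = gibbs S μ y l x := by
  refine Finset.prod_congr rfl fun i hi => ?_
  have hi := Finset.mem_range.1 hi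
  rw [cls_eq_of_le S hl x z hz (by omega : i + 1 ≤ l), cls_eq_of_le S hl x z hz hi.le]

/-- `gibbs S μ y l` gives the class masses of the distribution `gibbs S μ y S.L` on `X`. -/
lemma sum_gibbs (S : SimStruct X) (μ : ℕ → ℝ) (y : X → ℝ)
    (hμ : ∀ l, 1 ≤ l → l ≤ S.L → 0 < μ l) (l : ℕ) (hl : l ≤ S.L) (x : X) :
    pC (gibbs S μ y S.L) (S.cls l x) = gibbs S μ y l x := by
  unfold pC
  induction hl using Nat.decreasingInduction generalizing x with
  | self => simp [S.cls_L]
  | of_succ k hk ih =>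
    rw [← sum_split S (k + 1) _ (cls_subset S hk x)]
    rw [← mul_one (gibbs S μ y k x), ← sum_exp_score S μ y hk (hμ _ (by omega) hk) (S.cls k x)
      ⟨x, S.mem_cls k x⟩, Finset.mul_sum]
    refine Finset.sum_congr rfl fun C hC => ?_
    obtain ⟨z, hz, rfl⟩ := Finset.mem_image.1 hC
    rw [ih z, ← gibbs_congr S μ y hk.le x z hz, gibbs, Finset.prod_range_succ,
      S.cls_congr k x z hz]
    rfl

/-! ### Conjugacy of the score and the nested entropy -/

/-- Abel summation. -/
lemma abel_sum (μ a : ℕ → ℝ) (ha : a 0 = 0) (n : ℕ) :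
    ∑ l ∈ Finset.range n, μ (l + 1) * (a (l + 1) - a l) =
      ∑ l ∈ Finset.Icc 1 n, (μ l - μ (l + 1)) * a l + μ (n + 1) * a n := by
  induction n with
  | zero => simp [ha]
  | succ n ih =>
    rw [Finset.sum_range_succ, ih, Finset.sum_Icc_succ_top (by omega)]
    ring

lemma sub_score_eq (S : SimStruct X) (μ : ℕ → ℝ) (y : X → ℝ)
    (hμ : ∀ l, 1 ≤ l → l ≤ S.L → 0 < μ l) (hμ_last : μ (S.L + 1) = 0) (x : X) :
    y x - score S μ y 0 Finset.univ =
      ∑ l ∈ Finset.Icc 1 S.L, (μ l - μ (l + 1)) * Real.log (gibbs S μ y l x) := by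
  have h := abel_sum μ (fun l => Real.log (gibbs S μ y l x)) (by simp [gibbs]) S.L
  rw [hμ_last, zero_mul, add_zero] at h
  rw [← h, ← score_L S μ y x, ← S.cls_zero x,
    ← Finset.sum_range_sub (fun l => score S μ y l (S.cls l x))]
  refine Finset.sum_congr rfl fun l hl => ?_
  have hm := hμ (l + 1) (by omega) (Finset.mem_range.1 hl)
  have : gibbs S μ y (l + 1) x = gibbs S μ y l x * Real.exp ((score S μ y (l + 1)
      (S.cls (l + 1) x) - score S μ y l (S.cls l x)) / μ (l + 1)) :=
    Finset.prod_range_succ _ _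
  rw [this, Real.log_mul (gibbs_pos ..).ne' (Real.exp_pos _).ne', Real.log_exp]
  field_simp
  ring

/-- Averaging `sub_score_eq` under `p` expresses `⟨y, p⟩ - y_X` through cross entropies
relative to the nested logit distribution. -/
lemma inner_sub_score (S : SimStruct X) (μ : ℕ → ℝ) (y : X → ℝ)
    (hμ : ∀ l, 1 ≤ l → l ≤ S.L → 0 < μ l) (hμ_last : μ (S.L + 1) = 0)
    (p : X → ℝ) (hp : p ∈ simplex X) :
    ∑ x, y x * p x - score S μ y 0 Finset.univ =
      ∑ l ∈ Finset.Icc 1 S.L, (μ l - μ (l + 1)) * ∑ C ∈ Finset.univ.image (S.cls l),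
        pC p C * Real.log (pC (gibbs S μ y S.L) C) := by
  have h1 : ∑ x, y x * p x - score S μ y 0 Finset.univ =
      ∑ x, (y x - score S μ y 0 Finset.univ) * p x := by
    simp only [sub_mul]
    rw [Finset.sum_sub_distrib, ← Finset.mul_sum, hp.2, mul_one]
  rw [h1]
  simp only [sub_score_eq S μ y hμ hμ_last, Finset.sum_mul]
  rw [Finset.sum_comm]
  refine Finset.sum_congr rfl fun l hl => ?_
  have hl := (Finset.mem_Icc.1 hl).2
  rw [← sum_split S l _ (fun _ _ => Finset.subset_univ _), Finset.mul_sum]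
  refine Finset.sum_congr rfl fun C hC => ?_
  obtain ⟨z, -, rfl⟩ := Finset.mem_image.1 hC
  rw [sum_gibbs S μ y hμ l hl, pC, Finset.sum_mul, Finset.mul_sum]
  refine Finset.sum_congr rfl fun x hx => ?_
  rw [gibbs_congr S μ y hl z x hx]
  ring

lemma gibbs_ineq {ι : Type*} (s : Finset ι) (a b : ι → ℝ) (ha : ∀ i ∈ s, 0 ≤ a i)
    (hb : ∀ i ∈ s, 0 < b i) (hab : ∑ i ∈ s, b i ≤ ∑ i ∈ s, a i) :
    ∑ i ∈ s, a i * Real.log (b i) ≤ ∑ i ∈ s, xlogx (a i) := by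
  have h : ∑ i ∈ s, (a i * Real.log (b i) - xlogx (a i)) ≤ ∑ i ∈ s, (b i - a i) := by
    refine Finset.sum_le_sum fun i hi => ?_
    rcases (ha i hi).eq_or_lt with h0 | h0
    · simp [xlogx, ← h0, (hb i hi).le]
    · have h1 := Real.log_le_sub_one_of_pos (div_pos (hb i hi) h0)
      rw [Real.log_div (hb i hi).ne' h0.ne'] at h1
      have h2 := mul_le_mul_of_nonneg_left h1 h0.le
      have h3 : a i * (b i / a i - 1) = b i - a i := by field_simp
      unfold xlogx
      linarith
  rw [Finset.sum_sub_distrib, Finset.sum_sub_distrib] at h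
  linarith

lemma gibbs_mem_simplex [Nonempty X] (S : SimStruct X) (μ : ℕ → ℝ) (y : X → ℝ)
    (hμ : ∀ l, 1 ≤ l → l ≤ S.L → 0 < μ l) : gibbs S μ y S.L ∈ simplex X := by
  refine ⟨fun x => (gibbs_pos ..).le, ?_⟩
  obtain ⟨x⟩ := ‹Nonempty X›
  have h := sum_gibbs S μ y hμ 0 (Nat.zero_le _) x
  simpa [pC, S.cls_zero, gibbs] using h

/-- The Fenchel-Young inequality for the nested entropy. -/
lemma fenchel_le [Nonempty X] (S : SimStruct X) (μ : ℕ → ℝ) (y : X → ℝ)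
    (hμ_mono : ∀ l : ℕ, 1 ≤ l → l < S.L → μ (l + 1) ≤ μ l)
    (hμ : ∀ l, 1 ≤ l → l ≤ S.L → 0 < μ l) (hμ_last : μ (S.L + 1) = 0)
    (p : X → ℝ) (hp : p ∈ simplex X) :
    ∑ x, y x * p x - score S μ y 0 Finset.univ ≤ nestEnt S μ p 0 Finset.univ := by
  rw [inner_sub_score S μ y hμ hμ_last p hp]
  refine Finset.sum_le_sum fun l hl => ?_
  obtain ⟨h1, hl⟩ := Finset.mem_Icc.1 hl
  refine mul_le_mul_of_nonneg_left ?_ ?_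
  · refine gibbs_ineq _ _ _ (fun C _ => Finset.sum_nonneg fun x _ => hp.1 x) (fun C hC => ?_) ?_
    · obtain ⟨z, -, rfl⟩ := Finset.mem_image.1 hC
      exact Finset.sum_pos (fun x _ => gibbs_pos ..) ⟨z, S.mem_cls l z⟩
    · unfold pC
      rw [sum_split S l _ (fun _ _ => Finset.subset_univ _),
        sum_split S l _ (fun _ _ => Finset.subset_univ _), hp.2, (gibbs_mem_simplex S μ y hμ).2]
  · rcases hl.eq_or_lt with rfl | hl'
    · rw [hμ_last, sub_zero]
      exact (hμ _ h1 le_rfl).le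
    · exact sub_nonneg.2 (hμ_mono l h1 hl')

/-! ### Monotonicity in the learning rate -/

theorem stmt12 (S : SimStruct X) (μ : ℕ → ℝ)
    (hμ_mono : ∀ l : ℕ, 1 ≤ l → l < S.L → μ (l + 1) ≤ μ l)
    (hμ_pos : 0 < μ S.L) (hμ_last : μ (S.L + 1) = 0)
    (y : X → ℝ) (η η' : ℝ) (hη : 0 < η) (hηη' : η ≤ η') :
    (1 / η) * (score S μ (fun x => η * y x) 0 Finset.univ +
        sInf ((fun q => nestEnt S μ q 0 Finset.univ) '' simplex X)) ≤
      (1 / η') * (score S μ (fun x => η' * y x) 0 Finset.univ +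
        sInf ((fun q => nestEnt S μ q 0 Finset.univ) '' simplex X)) := by
  have hμ := mu_pos S μ hμ_mono hμ_pos
  rcases isEmpty_or_nonempty X with hX | hX
  -- On an empty set every score is a multiple of `log 0 = 0`, and the simplex is empty.
  · have h0 : simplex X = ∅ := by
      ext p
      simp [simplex]
    simp [h0, score_rec S μ _ S.one_le_L]
  set q := gibbs S μ (fun x => η * y x) S.L with hq
  have hqs : q ∈ simplex X := gibbs_mem_simplex S μ _ hμ
  have h1 : ∑ x, η * y x * q x - score S μ (fun x => η * y x) 0 Finset.univ =
      nestEnt S μ q 0 Finset.univ := inner_sub_score S μ (fun x => η * y x) hμ hμ_last q hqs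
  have h2 := fenchel_le S μ (fun x => η' * y x) hμ_mono hμ hμ_last q hqs
  have hbdd : BddBelow ((fun q => nestEnt S μ q 0 Finset.univ) '' simplex X) := by
    refine ⟨-score S μ (fun _ => 0) 0 Finset.univ, ?_⟩
    rintro _ ⟨p, hp, rfl⟩
    simpa using fenchel_le S μ (fun _ => 0) hμ_mono hμ hμ_last p hp
  have h3 : sInf ((fun q => nestEnt S μ q 0 Finset.univ) '' simplex X) ≤
      nestEnt S μ q 0 Finset.univ := csInf_le hbdd ⟨q, hqs, rfl⟩
  set m := sInf ((fun q => nestEnt S μ q 0 Finset.univ) '' simplex X)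
  set H := nestEnt S μ q 0 Finset.univ
  simp only [mul_assoc, ← Finset.mul_sum] at h1 h2
  set T := ∑ x, y x * q x
  have hη' : 0 < η' := hη.trans_le hηη'
  calc (1 / η) * (score S μ (fun x => η * y x) 0 Finset.univ + m)
      = T - (H - m) / η := by
        rw [← h1]
        field_simp
        ring
    _ ≤ T - (H - m) / η' := by
        have := div_le_div_of_nonneg_left (sub_nonneg.2 h3) hη hηη'
        linarith
    _ = (1 / η') * (η' * T - H + m) := by
        field_simp
        ring
    _ ≤ _ := by
        refine mul_le_mul_of_nonneg_left ?_ (by positivity)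
        linarith

end NestedBandits
end
end

section
/- For every class C of level l ∈ {0,…,L}, the nested entropy h_C is convex on Δ(X); moreover, h_C is strictly convex on Δ(C) = { p ∈ Δ(X) : supp(p) ⊆ C }. -/
/-!
The nested entropy is a combination, with the nonnegative weights `μ l' - μ (l' + 1)`, of the level
entropies `∑ xlogx (p_{C'})`. Each level entropy is convex on the simplex because `t ↦ t log t` is
convex on `[0, ∞)` and `p ↦ p_{C'}` is linear (`convexOn_sum_xlogx`). For strictness it suffices
to look at level `L`: its weight `μ L` is positive, its classes are singletons, and two distinct
distributions supported on `C` differ at some point of `C`, where the strict convexity of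
`t log t` applies (`strictConvexOn_sum_singleton`).
-/

noncomputable section

namespace NestedBandits

variable {X : Type*} [Fintype X] [DecidableEq X]

lemma pC_combo (p q : X → ℝ) (a b : ℝ) (C : Finset X) :
    pC (a • p + b • q) C = a * pC p C + b * pC q C := by
  simp [pC, Finset.sum_add_distrib, Finset.mul_sum]

lemma strictConvexOn_xlogx : StrictConvexOn ℝ (Set.Ici 0) xlogx :=
  Real.strictConvexOn_mul_log

lemma convex_simplex : Convex ℝ (simplex X) := by
  rintro p ⟨hp, hp1⟩ q ⟨hq, hq1⟩ a b ha hb hab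
  refine ⟨fun x => ?_, ?_⟩
  · exact add_nonneg (mul_nonneg ha (hp x)) (mul_nonneg hb (hq x))
  · simp [Finset.sum_add_distrib, ← Finset.mul_sum, hp1, hq1, hab]

/-- The set `Δ(C)` of probability vectors supported on `C` is convex. -/
lemma convex_face (C : Finset X) :
    Convex ℝ {p : X → ℝ | p ∈ simplex X ∧ ∀ x, p x ≠ 0 → x ∈ C} := by
  rintro p ⟨hp, hpC⟩ q ⟨hq, hqC⟩ a b ha hb hab
  refine ⟨convex_simplex hp hq ha hb hab, fun x hx => ?_⟩
  by_contra hxC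
  have h1 : p x = 0 := by_contra fun h => hxC (hpC x h)
  have h2 : q x = 0 := by_contra fun h => hxC (hqC x h)
  simp [h1, h2] at hx

/-- The entropy of any finite family of subsets of `X` is convex on the simplex. -/
lemma convexOn_sum_xlogx (T : Finset (Finset X)) :
    ConvexOn ℝ (simplex X) (fun p => ∑ C' ∈ T, xlogx (pC p C')) := by
  refine ⟨convex_simplex, fun p hp q hq a b ha hb hab => ?_⟩
  simp only [smul_eq_mul, Finset.mul_sum, ← Finset.sum_add_distrib, pC_combo]
  exact Finset.sum_le_sum fun C' _ => strictConvexOn_xlogx.convexOn.2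
    (Finset.sum_nonneg fun x _ => hp.1 x) (Finset.sum_nonneg fun x _ => hq.1 x) ha hb hab

lemma strictConvexOn_sum_singleton (C : Finset X) :
    StrictConvexOn ℝ {p : X → ℝ | p ∈ simplex X ∧ ∀ x, p x ≠ 0 → x ∈ C}
      (fun p => ∑ x ∈ C, xlogx (p x)) := by
  refine ⟨convex_face C, fun p hp q hq hpq a b ha hb hab => ?_⟩
  simp only [smul_eq_mul, Finset.mul_sum, ← Finset.sum_add_distrib, Pi.add_apply, Pi.smul_apply]
  obtain ⟨x, hx⟩ := Function.ne_iff.mp hpq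
  have hxC : x ∈ C := by
    by_contra h
    have h1 : p x = 0 := by_contra fun h' => h (hp.2 x h')
    have h2 : q x = 0 := by_contra fun h' => h (hq.2 x h')
    exact hx (h1.trans h2.symm)
  exact Finset.sum_lt_sum
    (fun y _ => strictConvexOn_xlogx.convexOn.2 (hp.1.1 y) (hq.1.1 y) ha.le hb.le hab)
    ⟨x, hxC, strictConvexOn_xlogx.2 (hp.1.1 x) (hq.1.1 x) hx ha hb hab⟩

/-- Level `L` consists of singletons, so its entropy is a sum over points. -/
lemma sum_level_L (S : SimStruct X) (C : Finset X) (p : X → ℝ) :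
    ∑ C' ∈ C.image (S.cls S.L), xlogx (pC p C') = ∑ x ∈ C, xlogx (p x) := by
  have h : S.cls S.L = fun x => {x} := funext S.cls_L
  rw [h, Finset.sum_image fun x _ y _ hxy => Finset.singleton_injective hxy]
  simp [pC]

/-- Nonnegative combinations of level entropies are convex on the simplex. -/
lemma convexOn_sum_levels (S : SimStruct X) (w : ℕ → ℝ) (I : Finset ℕ)
    (hw : ∀ k ∈ I, 0 ≤ w k) (C : Finset X) :
    ConvexOn ℝ (simplex X)
      (fun p => ∑ k ∈ I, w k * ∑ C' ∈ C.image (S.cls k), xlogx (pC p C')) := by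
  refine ⟨convex_simplex, fun p hp q hq a b ha hb hab => ?_⟩
  simp only [smul_eq_mul]
  rw [Finset.mul_sum, Finset.mul_sum, ← Finset.sum_add_distrib]
  refine Finset.sum_le_sum fun k hk => ?_
  have h := mul_le_mul_of_nonneg_left
    ((convexOn_sum_xlogx (C.image (S.cls k))).2 hp hq ha hb hab) (hw k hk)
  simp only [smul_eq_mul] at h
  linarith

theorem stmt19 (S : SimStruct X) (μ : ℕ → ℝ)
    (hμ_mono : ∀ l : ℕ, 1 ≤ l → l < S.L → μ (l + 1) ≤ μ l)
    (hμ_pos : 0 < μ S.L) (hμ_last : μ (S.L + 1) = 0)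
    (l : ℕ) (hlL : l ≤ S.L) (x₀ : X) :
    ConvexOn ℝ (simplex X) (fun p => nestEnt S μ p l (S.cls l x₀)) ∧
    StrictConvexOn ℝ {p | p ∈ simplex X ∧ ∀ x, p x ≠ 0 → x ∈ S.cls l x₀}
      (fun p => nestEnt S μ p l (S.cls l x₀)) := by
  have hL := S.one_le_L
  have hw : ∀ k ∈ Finset.Icc (max l 1) S.L, 0 ≤ μ k - μ (k + 1) := by
    intro k hk
    rw [Finset.mem_Icc] at hk
    rcases hk.2.lt_or_eq with h | h
    · exact sub_nonneg.mpr (hμ_mono k (le_of_max_le_right hk.1) h)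
    · rw [h, hμ_last, sub_zero]
      exact hμ_pos.le
  refine ⟨convexOn_sum_levels S (fun k => μ k - μ (k + 1)) _ hw _, ?_⟩
  have hmem : S.L ∈ Finset.Icc (max l 1) S.L :=
    Finset.mem_Icc.mpr ⟨max_le hlL hL, le_rfl⟩
  -- Split off level `L`, the only level whose contribution is strictly convex.
  have hsplit : (fun p => nestEnt S μ p l (S.cls l x₀)) =
      (fun p => ∑ k ∈ (Finset.Icc (max l 1) S.L).erase S.L,
        (μ k - μ (k + 1)) * ∑ C' ∈ (S.cls l x₀).image (S.cls k), xlogx (pC p C')) +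
      (fun p => μ S.L * ∑ x ∈ S.cls l x₀, xlogx (p x)) := by
    funext p
    rw [Pi.add_apply, ← sum_level_L S, nestEnt, ← Finset.sum_erase_add _ _ hmem, hμ_last,
      sub_zero]
  rw [hsplit]
  refine ConvexOn.add_strictConvexOn
    ((convexOn_sum_levels S (fun k => μ k - μ (k + 1)) _
      (fun k hk => hw k (Finset.mem_of_mem_erase hk)) _).subset (fun p hp => hp.1)
      (convex_face _)) ?_
  have hs := strictConvexOn_sum_singleton (S.cls l x₀)
  refine ⟨hs.1, fun p hp q hq hpq a b ha hb hab => ?_⟩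
  have h := mul_lt_mul_of_pos_left (hs.2 hp hq hpq ha hb hab) hμ_pos
  simp only [smul_eq_mul] at h ⊢
  linarith

end NestedBandits
end
end
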